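/- arXiv:1610.09553 — 6 statements merged into one kernel-verified Lean document; each statement's English description precedes it below -/
import Mathlib

section
/- Let n ≥ 1 and m ≥ 1. Let x_1,…,x_m ∈ ℝ^n be pairwise distinct points and a_1,…,a_m ∈ ℝ \ {0} be pairwise distinct nonzero amplitudes, and let x'_1,…,x'_m ∈ ℝ^n be pairwise distinct points and a'_1,…,a'_m ∈ ℝ \ {0} be pairwise distinct nonzero amplitudes. Let Γ ⊆ ℝ^n be a set of n·m(m−1)/2 + n + 1 distinct points such that no affine hyperplane of ℝ^n contains more than n points of Γ. If for every y ∈ Γ and every integer l with 0 ≤ l ≤ 2m−1 one has ∑_{k=1}^m a_k ‖y − x_k‖^l = ∑_{k=1}^m a'_k ‖y − x'_k‖^l, then there exists a permutation σ of {1,…,m} such that x'_k = x_{σ(k)} and a'_k = a_{σ(k)} for all k. (This is the uniqueness statement of Theorem 3.1: a distribution f = ∑_{k=1}^m a_k δ_{x_k} is uniquely determined by its spherical mean transform at the points of Γ, since the value of the spherical mean transform R_y f on the test function t ↦ t^l is ∑_k a_k ‖y − x_k‖^l.) -/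
open scoped RealInnerProductSpace

/-
Write `f = ∑ aₖ δ_{xₖ}` and `f' = ∑ a'ₖ δ_{x'ₖ}`. For each center `y ∈ Γ`, the discrete
distributions `R_y f` and `R_y f'` have at most `2m` atoms together, so agreement of their first
`2m` moments makes them equal (Vandermonde). A center that separates the nodes of `f` thus matches
the nodes of `f'` with those of `f`, respecting amplitudes and distances to `y`; as the `aₖ` are
pairwise distinct, the matching does not depend on `y`. Two points `p ≠ q` are equidistant only
from centers on one hyperplane, that is, from at most `n` points of `Γ`. Hence at most
`n * m.choose 2` centers fail to separate the nodes of `f`, and the more than `n` remaining ones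
force matched nodes to coincide.
-/

section

open Finset Function

theorem finsupp_eq_zero_of_forall_moment_eq_zero {R : Type*} [CommRing R] [IsDomain R]
    {f : R →₀ R} (h : ∀ l < #f.support, Finsupp.linearCombination R (· ^ l) f = 0) : f = 0 := by
  let e := f.support.equivFin.symm
  have hweights : (fun i => f (e i)) = 0 := by
    refine Matrix.eq_zero_of_forall_pow_sum_mul_pow_eq_zero (f := fun i => (e i : R))
      (Subtype.val_injective.comp e.injective) fun l => ?_
    rw [← h l l.isLt]
    exact (e.sum_comp fun t => f t * (t : R) ^ (l : ℕ)).trans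
      (sum_coe_sort f.support fun t => f t * t ^ (l : ℕ))
  ext t
  by_contra ht
  exact ht (by simpa [e] using congrFun hweights (e.symm ⟨t, Finsupp.mem_support_iff.mpr ht⟩))

variable {ι ι' : Type*} [Fintype ι] [Fintype ι']

theorem card_support_sum_single_le {X M : Type*} [AddCommMonoid M] (x : ι → X) (a : ι → M) :
    #(∑ k, Finsupp.single (x k) (a k)).support ≤ Fintype.card ι := by
  classical
  calc
    _ ≤ #(univ.biUnion fun k => (Finsupp.single (x k) (a k)).support) :=
      card_le_card Finsupp.support_finsetSum
    _ ≤ Fintype.card ι * 1 :=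
      card_biUnion_le_card_mul _ _ _ fun _ _ => card_le_card Finsupp.support_single_subset
    _ = Fintype.card ι := mul_one _

theorem sum_single_eq_sum_single_of_moments_eq {R : Type*} [CommRing R] [IsDomain R]
    {r a : ι → R} {r' a' : ι' → R}
    (h : ∀ l < Fintype.card ι + Fintype.card ι', ∑ k, a k * r k ^ l = ∑ k, a' k * r' k ^ l) :
    ∑ k, Finsupp.single (r k) (a k) = ∑ k, Finsupp.single (r' k) (a' k) := by
  classical
  refine sub_eq_zero.mp (finsupp_eq_zero_of_forall_moment_eq_zero fun l hl => ?_)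
  have hcard : l < Fintype.card ι + Fintype.card ι' :=
    hl.trans_le <| (card_le_card Finsupp.support_sub).trans <| (card_union_le _ _).trans <|
      add_le_add (card_support_sum_single_le r a) (card_support_sum_single_le r' a')
  simpa [sub_eq_zero] using h l hcard

theorem sum_single_apply_of_injective {X M : Type*} [AddCommMonoid M] {x : ι → X}
    (hx : Injective x) (a : ι → M) (k : ι) : (∑ j, Finsupp.single (x j) (a j)) (x k) = a k := by
  classical
  simp [Finsupp.finsetSum_apply, Finsupp.single_apply, hx.eq_iff]

theorem exists_equiv_of_sum_single_eq {X M : Type*} [AddCommMonoid M]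
    {x : ι → X} {a : ι → M} {x' : ι' → X} {a' : ι' → M}
    (hcard : Fintype.card ι' ≤ Fintype.card ι) (hx : Injective x) (ha : ∀ k, a k ≠ 0)
    (h : ∑ k, Finsupp.single (x k) (a k) = ∑ k, Finsupp.single (x' k) (a' k)) :
    ∃ σ : ι' ≃ ι, ∀ k, x' k = x (σ k) ∧ a' k = a (σ k) := by
  classical
  have hnode (k : ι) : ∃ j, x' j = x k := by
    by_contra! hne
    refine ha k ?_
    rw [← sum_single_apply_of_injective hx a k, h]
    simp [Finsupp.finsetSum_apply, hne]
  choose τ hτ using hnode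
  have hτinj : Injective τ := fun i j hij => hx (by rw [← hτ i, ← hτ j, hij])
  let σ := (Equiv.ofBijective τ (hτinj.bijective_of_nat_card_le (by simpa using hcard))).symm
  have hxσ (k : ι') : x' k = x (σ k) := by
    rw [← hτ (σ k)]
    exact congrArg x' (Equiv.ofBijective_apply_symm_apply τ _ k).symm
  have hx' : Injective x' := by
    rw [funext hxσ]
    exact hx.comp σ.injective
  refine ⟨σ, fun k => ⟨hxσ k, ?_⟩⟩
  rw [← sum_single_apply_of_injective hx' a' k, ← h, hxσ k, sum_single_apply_of_injective hx]

theorem card_filter_not_injective_le {α β : Type*} [DecidableEq β] {n : ℕ}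
    {Γ : Finset α} {g : α → ι → β} (hg : ∀ i j, i ≠ j → #{y ∈ Γ | g y i = g y j} ≤ n) :
    #{y ∈ Γ | ¬ Injective (g y)} ≤ n * (Fintype.card ι).choose 2 := by
  classical
  have hcover : {y ∈ Γ | ¬ Injective (g y)} ⊆
      (powersetCard 2 univ).biUnion fun s : Finset ι => {y ∈ Γ | ¬ Set.InjOn (g y) s} := by
    intro y hy
    obtain ⟨hyΓ, hy⟩ := mem_filter.mp hy
    obtain ⟨i, j, hij, hne⟩ := not_injective_iff.mp hy
    refine mem_biUnion.mpr ⟨{i, j}, by simp [card_pair hne], mem_filter.mpr ⟨hyΓ, fun hinj => ?_⟩⟩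
    exact hne (hinj (by simp) (by simp) hij)
  have hpair (s : Finset ι) (hs : s ∈ powersetCard 2 univ) :
      #{y ∈ Γ | ¬ Set.InjOn (g y) s} ≤ n := by
    obtain ⟨i, j, hij, rfl⟩ := card_eq_two.mp (mem_powersetCard.mp hs).2
    simpa [Set.injOn_pair, hij] using hg i j hij
  calc
    _ ≤ _ := card_le_card hcover
    _ ≤ #(powersetCard 2 (univ : Finset ι)) * n := card_biUnion_le_card_mul _ _ _ hpair
    _ = n * (Fintype.card ι).choose 2 := by rw [card_powersetCard, card_univ, mul_comm]

theorem exists_equiv_of_moments_comp_eq {α X R : Type*} [CommRing R] [IsDomain R] [DecidableEq R]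
    {n : ℕ} {x : ι → X} {a : ι → R} {x' : ι' → X} {a' : ι' → R}
    (hcard : Fintype.card ι' ≤ Fintype.card ι) (hx : Injective x) (ha0 : ∀ k, a k ≠ 0)
    (ha : Injective a) {Γ : Finset α} (hΓcard : n * (Fintype.card ι).choose 2 + n < #Γ)
    {φ : α → X → R} (hφ : ∀ p q, p ≠ q → #{y ∈ Γ | φ y p = φ y q} ≤ n)
    (hdata : ∀ y ∈ Γ, ∀ l < Fintype.card ι + Fintype.card ι',
      ∑ k, a k * φ y (x k) ^ l = ∑ k, a' k * φ y (x' k) ^ l) :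
    ∃ σ : ι' ≃ ι, ∀ k, x' k = x (σ k) ∧ a' k = a (σ k) := by
  classical
  let G : Finset α := {y ∈ Γ | Injective fun k => φ y (x k)}
  have hGcard : n < #G := by
    have hbad : #{y ∈ Γ | ¬ Injective fun k => φ y (x k)} ≤ n * (Fintype.card ι).choose 2 :=
      card_filter_not_injective_le fun i j hij => hφ _ _ (hx.ne hij)
    have hsplit : #G + #{y ∈ Γ | ¬ Injective fun k => φ y (x k)} = #Γ :=
      card_filter_add_card_filter_not _
    omega
  have hmatch (y) (hy : y ∈ G) :
      ∃ σ : ι' ≃ ι, ∀ k, φ y (x' k) = φ y (x (σ k)) ∧ a' k = a (σ k) := by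
    obtain ⟨hyΓ, hinj⟩ := mem_filter.mp hy
    exact exists_equiv_of_sum_single_eq hcard hinj ha0
      (sum_single_eq_sum_single_of_moments_eq (hdata y hyΓ))
  obtain ⟨y₀, hy₀⟩ : G.Nonempty := card_pos.mp (Nat.zero_lt_of_lt hGcard)
  obtain ⟨σ, hσ⟩ := hmatch y₀ hy₀
  have hvalue (k : ι') (y) (hy : y ∈ G) : φ y (x' k) = φ y (x (σ k)) := by
    obtain ⟨σ', hσ'⟩ := hmatch y hy
    rw [ha ((hσ k).2.symm.trans (hσ' k).2)]
    exact (hσ' k).1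
  refine ⟨σ, fun k => ⟨?_, (hσ k).2⟩⟩
  by_contra hne
  have hG : G ⊆ {y ∈ Γ | φ y (x' k) = φ y (x (σ k))} := fun y hy =>
    mem_filter.mpr ⟨(mem_filter.mp hy).1, hvalue k y hy⟩
  exact (hGcard.trans_le (card_le_card hG)).not_ge (hφ _ _ hne)

variable {E : Type*} [NormedAddCommGroup E] [InnerProductSpace ℝ E]

theorem exists_hyperplane_of_norm_sub_eq {p q : E} (hpq : p ≠ q) :
    ∃ (θ : E) (ρ : ℝ), ‖θ‖ = 1 ∧ ∀ y : E, ‖y - p‖ = ‖y - q‖ → ⟪y, θ⟫ = ρ := by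
  refine ⟨‖q - p‖⁻¹ • (q - p), ‖q - p‖⁻¹ * (dist p q ^ 2 / 2 + ⟪p, q - p⟫),
    norm_smul_inv_norm (𝕜 := ℝ) (sub_ne_zero.mpr hpq.symm), fun y hy => ?_⟩
  have hy : y ∈ AffineSubspace.perpBisector p q := by
    rwa [AffineSubspace.mem_perpBisector_iff_dist_eq, dist_eq_norm, dist_eq_norm]
  rw [AffineSubspace.mem_perpBisector_iff_inner_eq, vsub_eq_sub, vsub_eq_sub, inner_sub_left] at hy
  rw [inner_smul_right, ← hy, sub_add_cancel]

theorem stmt0_general {n : ℕ} {x : ι → E} {a : ι → ℝ} {x' : ι' → E} {a' : ι' → ℝ}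
    (hcard : Fintype.card ι' ≤ Fintype.card ι) (hx : Injective x) (ha0 : ∀ k, a k ≠ 0)
    (ha : Injective a) {Γ : Finset E} (hΓcard : n * (Fintype.card ι).choose 2 + n < #Γ)
    (hΓ : ∀ (θ : E) (ρ : ℝ), ‖θ‖ = 1 → #{y ∈ Γ | ⟪y, θ⟫ = ρ} ≤ n)
    (hdata : ∀ y ∈ Γ, ∀ l < Fintype.card ι + Fintype.card ι',
      ∑ k, a k * ‖y - x k‖ ^ l = ∑ k, a' k * ‖y - x' k‖ ^ l) :
    ∃ σ : ι' ≃ ι, ∀ k, x' k = x (σ k) ∧ a' k = a (σ k) := by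
  refine exists_equiv_of_moments_comp_eq (φ := fun y p => ‖y - p‖) hcard hx ha0 ha hΓcard
    (fun p q hpq => ?_) hdata
  obtain ⟨θ, ρ, hθ, hyperplane⟩ := exists_hyperplane_of_norm_sub_eq hpq
  exact (card_le_card (monotone_filter_right _ fun y _ => hyperplane y)).trans (hΓ θ ρ hθ)

end

/-- Uniqueness statement of Theorem 3.1: a distribution `f = ∑ aₖ δ_{xₖ}` with pairwise
distinct nodes and pairwise distinct nonzero amplitudes is uniquely determined by the
moments `∑ₖ aₖ ‖y - xₖ‖ˡ`, `0 ≤ l ≤ 2m - 1`, of its spherical mean transform at the points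
of a set `Γ` of `n·m(m-1)/2 + n + 1` points, no `n + 1` of which lie on a common affine
hyperplane. -/
theorem stmt0 (n m : ℕ) (hn : 1 ≤ n) (hm : 1 ≤ m)
    (x x' : Fin m → EuclideanSpace ℝ (Fin n)) (a a' : Fin m → ℝ)
    (hx : Function.Injective x) (hx' : Function.Injective x')
    (ha0 : ∀ k, a k ≠ 0) (ha'0 : ∀ k, a' k ≠ 0)
    (ha : Function.Injective a) (ha' : Function.Injective a')
    (Γ : Finset (EuclideanSpace ℝ (Fin n)))
    (hΓcard : Γ.card = n * (m * (m - 1)) / 2 + n + 1)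
    (hΓ : ∀ (θ : EuclideanSpace ℝ (Fin n)) (ρ : ℝ), ‖θ‖ = 1 →
      (Γ.filter (fun y => ⟪y, θ⟫ = ρ)).card ≤ n)
    (hdata : ∀ y ∈ Γ, ∀ l : ℕ, l ≤ 2 * m - 1 →
      ∑ k, a k * ‖y - x k‖ ^ l = ∑ k, a' k * ‖y - x' k‖ ^ l) :
    ∃ σ : Equiv.Perm (Fin m), ∀ k, x' k = x (σ k) ∧ a' k = a (σ k) := by
  have hchoose : n * (m * (m - 1)) / 2 = n * m.choose 2 := by
    rw [Nat.choose_two_right, Nat.mul_div_assoc n (Nat.even_mul_pred_self m).two_dvd]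
  exact stmt0_general le_rfl hx ha0 ha (by rw [Fintype.card_fin]; omega) hΓ
    fun y hy l hl => hdata y hy l (by rw [Fintype.card_fin] at hl; omega)
end

section
/- Let n ≥ 1 and m ≥ 1. Let θ_1,…,θ_m and θ'_1,…,θ'_m be unit vectors in ℝ^n, ρ_1,…,ρ_m and ρ'_1,…,ρ'_m be positive reals, and a_1,…,a_m, a'_1,…,a'_m be pairwise distinct nonzero reals (each family pairwise distinct), such that the pairs (θ_1,ρ_1),…,(θ_m,ρ_m) are pairwise distinct and the pairs (θ'_1,ρ'_1),…,(θ'_m,ρ'_m) are pairwise distinct (equivalently, the corresponding hyperplanes ⟨x,θ_k⟩ = ρ_k are pairwise distinct as subsets of ℝ^n, since ρ_k > 0). Let Γ ⊆ ℝ^n be a set of n·m(m−1) + 2n + 1 distinct points such that no affine hyperplane of ℝ^n contains more than n points of Γ. If for every y ∈ Γ and every integer l with 1 ≤ l ≤ 2m one has ∑_{k=1}^m a_k e^{−l(ρ_k − ⟨y,θ_k⟩)^2} = ∑_{k=1}^m a'_k e^{−l(ρ'_k − ⟨y,θ'_k⟩)^2}, then there exists a permutation σ of {1,…,m} such that a'_k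 = a_{σ(k)}, ρ'_k = ρ_{σ(k)} and θ'_k = θ_{σ(k)} for all k. (This is the uniqueness statement of Theorem 3.2: a distribution f = ∑_k a_k δ_{(θ_k,ρ_k)} supported on hyperplanes is uniquely determined by its spherical mean transform at the points of Γ, since evaluating R_y f on the Gaussian test function t ↦ e^{−lt²} yields (π/l)^{(n−1)/2} ∑_k a_k e^{−l(ρ_k − ⟨y,θ_k⟩)^2}.) -/
open scoped RealInnerProductSpace

/-!
Since `exp (-l d²) = (exp (-d²)) ^ l`, the data at a point `y` are moments of the measure
`∑ aₖ δ_{xₖ}` with nodes `xₖ = exp (-(ρₖ - ⟪y, θₖ⟫)²)`, and a signed measure with at most `N` atoms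
is determined by `N` consecutive moments. If the nodes are distinct, the data therefore determine
the amplitudes and, amplitude by amplitude, the nodes.

Two nodes `xᵢ`, `xⱼ` coincide only on the two hyperplanes `⟪y, θᵢ ∓ θⱼ⟫ = ρᵢ ∓ ρⱼ`. The `m(m-1)/2`
pairs thus spoil at most `n·m(m-1)` points of `Γ`, leaving more than `2n`. The amplitudes being
distinct, the matching of the two families is the same at all of these points, so matched
hyperplanes are equidistant from more than `2n` points of `Γ`; by the same count they are equal.
-/

section Moments

variable {R ι κ : Type*} [Fintype ι] [Fintype κ]

theorem sum_mul_eval_eq_zero_of_moments_eq_zero [CommSemiring R] {w x : ι → R} {N : ℕ}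
    (h : ∀ l < N, ∑ i, w i * x i ^ l = 0) {p : Polynomial R} (hp : p.natDegree < N) :
    ∑ i, w i * p.eval (x i) = 0 := by
  simp_rw [Polynomial.eval_eq_sum_range' hp, Finset.mul_sum, mul_left_comm (w _)]
  rw [Finset.sum_comm]
  refine Finset.sum_eq_zero fun l hl => ?_
  rw [← Finset.mul_sum, h l (Finset.mem_range.1 hl), mul_zero]

variable [CommRing R] [IsDomain R]

theorem sum_fiber_eq_zero_of_moments_eq_zero [DecidableEq R] {w x : ι → R}
    (h : ∀ l < Fintype.card ι, ∑ i, w i * x i ^ l = 0) (t : R) :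
    ∑ i with x i = t, w i = 0 := by
  by_cases ht : t ∈ Finset.univ.image x
  · set q := Lagrange.nodal ((Finset.univ.image x).erase t) id
    have hq_deg : q.natDegree < Fintype.card ι := by
      rw [Lagrange.natDegree_nodal]
      exact (Finset.card_erase_lt_of_mem ht).trans_le Finset.card_image_le
    have hq_node : ∀ i, x i ≠ t → q.eval (x i) = 0 := fun i hi =>
      Lagrange.eval_nodal_at_node (v := id)
        (Finset.mem_erase.2 ⟨hi, Finset.mem_image_of_mem x (Finset.mem_univ i)⟩)
    have hq_t : q.eval t ≠ 0 :=
      Lagrange.eval_nodal_not_at_node fun _ hs => (Finset.ne_of_mem_erase hs).symm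
    have hmul : (∑ i with x i = t, w i) * q.eval t = 0 := by
      rw [← sum_mul_eval_eq_zero_of_moments_eq_zero h hq_deg, Finset.sum_mul, Finset.sum_filter]
      refine Finset.sum_congr rfl fun i _ => ?_
      split_ifs with hi
      · rw [hi]
      · rw [hq_node i hi, mul_zero]
    exact (mul_eq_zero.1 hmul).resolve_right hq_t
  · refine Finset.sum_eq_zero fun i hi => absurd ?_ ht
    exact Finset.mem_image.2 ⟨i, Finset.mem_univ i, (Finset.mem_filter.1 hi).2⟩

theorem sum_fiber_eq_of_moments_eq [DecidableEq R] {w x : ι → R} {w' x' : κ → R}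
    (h : ∀ l < Fintype.card ι + Fintype.card κ, ∑ i, w i * x i ^ l = ∑ j, w' j * x' j ^ l)
    (t : R) : ∑ i with x i = t, w i = ∑ j with x' j = t, w' j := by
  have hsum := sum_fiber_eq_zero_of_moments_eq_zero (w := Sum.elim w (-w')) (x := Sum.elim x x')
    (fun l hl => by simp [h l (by rwa [Fintype.card_sum] at hl)]) t
  rw [← sub_eq_zero, ← hsum, sub_eq_add_neg, ← Finset.sum_neg_distrib]
  simp_rw [Finset.sum_filter]
  rw [Fintype.sum_sum_type]
  rfl

theorem exists_equiv_of_moments_eq (hκ : Fintype.card κ ≤ Fintype.card ι) {w x : ι → R}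
    {w' x' : κ → R} (hw : ∀ i, w i ≠ 0) (hx : Function.Injective x)
    (h : ∀ l < Fintype.card ι + Fintype.card κ, ∑ i, w i * x i ^ l = ∑ j, w' j * x' j ^ l) :
    ∃ e : κ ≃ ι, ∀ j, w' j = w (e j) ∧ x' j = x (e j) := by
  classical
  have hfiber (i : ι) : ∑ j with x' j = x i, w' j = w i := by
    rw [← sum_fiber_eq_of_moments_eq h]
    simp [Finset.sum_filter, hx.eq_iff]
  have hnode (i : ι) : ∃ j, x' j = x i := by
    obtain ⟨j, hj, -⟩ := Finset.exists_ne_zero_of_sum_ne_zero ((hfiber i).trans_ne (hw i))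
    exact ⟨j, (Finset.mem_filter.1 hj).2⟩
  choose τ hτ using hnode
  have hτ_inj : Function.Injective τ := fun i i' hii' => hx (by rw [← hτ i, ← hτ i', hii'])
  have hτ_bij : Function.Bijective τ :=
    hτ_inj.bijective_of_nat_card_le (by simpa only [Nat.card_eq_fintype_card] using hκ)
  refine ⟨(Equiv.ofBijective τ hτ_bij).symm, fun j => ?_⟩
  obtain ⟨i, rfl⟩ := hτ_bij.surjective j
  rw [Equiv.ofBijective_symm_apply_apply]
  refine ⟨?_, hτ i⟩
  have hsingle : ({j | x' j = x i} : Finset κ) = {τ i} := by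
    ext j
    obtain ⟨i', rfl⟩ := hτ_bij.surjective j
    simp [hτ, hx.eq_iff, hτ_inj.eq_iff]
  rw [← hfiber i, hsingle, Finset.sum_singleton]

theorem exists_equiv_of_pos_moments_eq (hκ : Fintype.card κ ≤ Fintype.card ι) {w x : ι → R}
    {w' x' : κ → R} (hw : ∀ i, w i ≠ 0) (hx : Function.Injective x) (hx0 : ∀ i, x i ≠ 0)
    (h : ∀ l, 1 ≤ l → l ≤ Fintype.card ι + Fintype.card κ →
      ∑ i, w i * x i ^ l = ∑ j, w' j * x' j ^ l) :
    ∃ e : κ ≃ ι, ∀ j, w' j = w (e j) ∧ x' j = x (e j) := by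
  obtain ⟨e, he⟩ := exists_equiv_of_moments_eq hκ (w := fun i => w i * x i)
    (w' := fun j => w' j * x' j) (fun i => mul_ne_zero (hw i) (hx0 i)) hx fun l hl => by
      simpa only [pow_succ', mul_assoc] using h (l + 1) (Nat.le_add_left 1 l) hl
  refine ⟨e, fun j => ⟨?_, (he j).2⟩⟩
  have hmul := (he j).1
  rw [(he j).2] at hmul
  exact mul_right_cancel₀ (hx0 _) hmul

end Moments

section Counting

variable {α β R ι κ : Type*} [Fintype ι] [Fintype κ]

theorem card_filter_not_injective_le_s1 [DecidableEq β] {s : Finset α}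
    {f : ι → α → β} {C : ℕ} (hf : ∀ i j, i ≠ j → (s.filter fun y => f i y = f j y).card ≤ C) :
    (s.filter fun y => ¬ Function.Injective fun i => f i y).card
      ≤ (Fintype.card ι).choose 2 * C := by
  classical
  set pairs : Finset (Finset ι) := Finset.univ.powersetCard 2
  set collisions : Finset ι → Finset α := fun p =>
    s.filter fun y => ¬ Set.InjOn (fun i => f i y) p
  have hcover : (s.filter fun y => ¬ Function.Injective fun i => f i y)
      ⊆ pairs.biUnion collisions := by
    intro y hy
    obtain ⟨hys, hy⟩ := Finset.mem_filter.1 hy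
    obtain ⟨i, j, hij, hne⟩ := Function.not_injective_iff.1 hy
    refine Finset.mem_biUnion.2 ⟨{i, j}, ?_, Finset.mem_filter.2 ⟨hys, fun hinj => hne ?_⟩⟩
    · exact Finset.mem_powersetCard.2 ⟨Finset.subset_univ _, Finset.card_pair hne⟩
    · exact hinj (by simp) (by simp) hij
  have hcollisions : ∀ p ∈ pairs, (collisions p).card ≤ C := by
    intro p hp
    obtain ⟨i, j, hne, rfl⟩ := Finset.card_eq_two.1 (Finset.mem_powersetCard.1 hp).2
    convert hf i j hne using 4 with y
    rw [Finset.coe_pair, Set.injOn_pair, Classical.not_imp, and_iff_left hne]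
  calc _ ≤ (pairs.biUnion collisions).card := Finset.card_le_card hcover
    _ ≤ pairs.card * C := Finset.card_biUnion_le_card_mul _ _ _ hcollisions
    _ = (Fintype.card ι).choose 2 * C := by rw [Finset.card_powersetCard, Finset.card_univ]

theorem exists_equiv_lt_card_filter_eq_of_pos_moments_eq [CommRing R] [IsDomain R]
    [DecidableEq R] (hκ : Fintype.card κ ≤ Fintype.card ι) {s : Finset α} {a : ι → R}
    {a' : κ → R} {f : ι → α → R} {f' : κ → α → R} {C D : ℕ}
    (ha0 : ∀ i, a i ≠ 0) (ha : Function.Injective a) (hf0 : ∀ i, ∀ y ∈ s, f i y ≠ 0)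
    (hf : ∀ i j, i ≠ j → (s.filter fun y => f i y = f j y).card ≤ C)
    (hs : (Fintype.card ι).choose 2 * C + D < s.card)
    (h : ∀ y ∈ s, ∀ l, 1 ≤ l → l ≤ Fintype.card ι + Fintype.card κ →
      ∑ i, a i * f i y ^ l = ∑ j, a' j * f' j y ^ l) :
    ∃ e : κ ≃ ι, ∀ j, a' j = a (e j) ∧ D < (s.filter fun y => f' j y = f (e j) y).card := by
  classical
  set good := s.filter fun y => Function.Injective fun i => f i y with hgood
  have hgood_card : D < good.card := by
    have hbad := card_filter_not_injective_le_s1 hf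
    have hsplit := s.card_filter_add_card_filter_not fun y => Function.Injective fun i => f i y
    rw [← hgood] at hsplit
    omega
  have hmatch : ∀ y ∈ good, ∃ e : κ ≃ ι, ∀ j, a' j = a (e j) ∧ f' j y = f (e j) y := by
    intro y hy
    obtain ⟨hys, hinj⟩ := Finset.mem_filter.1 hy
    exact exists_equiv_of_pos_moments_eq hκ ha0 hinj (fun i => hf0 i y hys) (h y hys)
  obtain ⟨y₀, hy₀⟩ : good.Nonempty := Finset.card_pos.1 (by omega)
  obtain ⟨e, he⟩ := hmatch y₀ hy₀
  refine ⟨e, fun j => ⟨(he j).1, hgood_card.trans_le (Finset.card_le_card fun y hy => ?_)⟩⟩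
  obtain ⟨e', he'⟩ := hmatch y hy
  have hej : e' j = e j := ha ((he' j).1.symm.trans (he j).1)
  exact Finset.mem_filter.2 ⟨(Finset.mem_filter.1 hy).1, hej ▸ (he' j).2⟩

end Counting

section Hyperplanes

variable {E : Type*} [NormedAddCommGroup E] [InnerProductSpace ℝ E] {Γ : Finset E} {N : ℕ}

/-- No affine hyperplane contains more than `N` points of `Γ`. For `N` the dimension of the space
this is the general position assumed of a sampling set. -/
def HyperplaneSectionCardLE (Γ : Finset E) (N : ℕ) : Prop :=
  ∀ (η : E) (c : ℝ), ‖η‖ = 1 → (Γ.filter fun y => ⟪y, η⟫ = c).card ≤ N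

/-- The Gaussian `exp (-d²)` of the distance `d` from `y` to the hyperplane `⟪x, θ⟫ = ρ`, when `θ`
is a unit vector. Its powers are the summands of the data, and for `θ` of any norm it is a
Gaussian in the affine function `ρ - ⟪y, θ⟫`. -/
noncomputable def hyperplaneGaussian (θ : E) (ρ : ℝ) (y : E) : ℝ :=
  Real.exp (-(ρ - ⟪y, θ⟫) ^ 2)

theorem hyperplaneGaussian_ne_zero (θ : E) (ρ : ℝ) (y : E) : hyperplaneGaussian θ ρ y ≠ 0 :=
  Real.exp_ne_zero _

theorem hyperplaneGaussian_pow (θ : E) (ρ : ℝ) (y : E) (l : ℕ) :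
    hyperplaneGaussian θ ρ y ^ l = Real.exp (-(l : ℝ) * (ρ - ⟪y, θ⟫) ^ 2) := by
  rw [hyperplaneGaussian, ← Real.exp_nat_mul, mul_neg, neg_mul]

theorem hyperplaneGaussian_eq_iff {θ₁ θ₂ : E} {ρ₁ ρ₂ : ℝ} {y : E} :
    hyperplaneGaussian θ₁ ρ₁ y = hyperplaneGaussian θ₂ ρ₂ y
      ↔ ⟪y, θ₁ - θ₂⟫ = ρ₁ - ρ₂ ∨ ⟪y, θ₁ + θ₂⟫ = ρ₁ + ρ₂ := by
  rw [hyperplaneGaussian, hyperplaneGaussian, Real.exp_eq_exp, neg_inj, sq_eq_sq_iff_eq_or_eq_neg,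
    inner_sub_right, inner_add_right]
  constructor <;> rintro (h | h) <;> [left; right; left; right] <;> linarith

theorem HyperplaneSectionCardLE.card_filter_inner_eq_le (hΓ : HyperplaneSectionCardLE Γ N)
    {η : E} {c : ℝ} (h : (η, c) ≠ 0) : (Γ.filter fun y => ⟪y, η⟫ = c).card ≤ N := by
  by_cases hη : η = 0
  · have hc : c ≠ 0 := fun hc => h (Prod.ext hη hc)
    simp [hη, hc.symm]
  · refine (Finset.card_le_card fun y hy => ?_).trans
      (hΓ (‖η‖⁻¹ • η) (‖η‖⁻¹ * c) (norm_smul_inv_norm hη))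
    rw [Finset.mem_filter] at hy ⊢
    exact ⟨hy.1, by rw [real_inner_smul_right, hy.2]⟩

theorem HyperplaneSectionCardLE.card_filter_hyperplaneGaussian_eq_le
    (hΓ : HyperplaneSectionCardLE Γ N) {θ₁ θ₂ : E} {ρ₁ ρ₂ : ℝ} (hρ : ρ₁ + ρ₂ ≠ 0)
    (hne : (θ₁, ρ₁) ≠ (θ₂, ρ₂)) :
    (Γ.filter fun y => hyperplaneGaussian θ₁ ρ₁ y = hyperplaneGaussian θ₂ ρ₂ y).card ≤ 2 * N := by
  classical
  have hsub := hΓ.card_filter_inner_eq_le (η := θ₁ - θ₂) (c := ρ₁ - ρ₂) (sub_ne_zero.2 hne)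
  have hadd := hΓ.card_filter_inner_eq_le (η := θ₁ + θ₂) (c := ρ₁ + ρ₂)
    fun h => hρ (congrArg Prod.snd h)
  simp only [hyperplaneGaussian_eq_iff, Finset.filter_or]
  exact (Finset.card_union_le _ _).trans ((add_le_add hsub hadd).trans (two_mul N).ge)

theorem stmt1_general {ι κ : Type*} [Fintype ι] [Fintype κ]
    (hκ : Fintype.card κ ≤ Fintype.card ι) {θ : ι → E} {θ' : κ → E} {ρ : ι → ℝ} {ρ' : κ → ℝ}
    {a : ι → ℝ} {a' : κ → ℝ} (hρ : ∀ i, 0 < ρ i) (hρ' : ∀ j, 0 ≤ ρ' j) (ha0 : ∀ i, a i ≠ 0)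
    (ha : Function.Injective a) (hpairs : Function.Injective fun i => (θ i, ρ i))
    (hΓcard : N * (Fintype.card ι * (Fintype.card ι - 1)) + 2 * N < Γ.card)
    (hΓ : HyperplaneSectionCardLE Γ N)
    (hdata : ∀ y ∈ Γ, ∀ l : ℕ, 1 ≤ l → l ≤ Fintype.card ι + Fintype.card κ →
      ∑ i, a i * Real.exp (-(l : ℝ) * (ρ i - ⟪y, θ i⟫) ^ 2)
        = ∑ j, a' j * Real.exp (-(l : ℝ) * (ρ' j - ⟪y, θ' j⟫) ^ 2)) :
    ∃ e : κ ≃ ι, ∀ j, a' j = a (e j) ∧ ρ' j = ρ (e j) ∧ θ' j = θ (e j) := by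
  have hcard : (Fintype.card ι).choose 2 * (2 * N) + 2 * N < Γ.card := by
    rwa [← mul_assoc, Nat.choose_two_right, Nat.div_two_mul_two_of_even (Nat.even_mul_pred_self _),
      mul_comm _ N]
  have hcollisions (i j : ι) (hij : i ≠ j) :=
    hΓ.card_filter_hyperplaneGaussian_eq_le (add_pos (hρ i) (hρ j)).ne' (hpairs.ne hij)
  simp only [← hyperplaneGaussian_pow] at hdata
  obtain ⟨e, he⟩ := exists_equiv_lt_card_filter_eq_of_pos_moments_eq hκ ha0 ha
    (fun i y _ => hyperplaneGaussian_ne_zero (θ i) (ρ i) y) hcollisions hcard hdata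
  refine ⟨e, fun j => ⟨(he j).1, ?_⟩⟩
  have hpair : (θ' j, ρ' j) = (θ (e j), ρ (e j)) := by
    by_contra hne
    exact (he j).2.not_ge (hΓ.card_filter_hyperplaneGaussian_eq_le
      (add_pos_of_nonneg_of_pos (hρ' j) (hρ (e j))).ne' hne)
  exact ⟨congrArg Prod.snd hpair, congrArg Prod.fst hpair⟩

end Hyperplanes

/-- Uniqueness statement of Theorem 3.2: a distribution `f = ∑ aₖ δ_{(θₖ,ρₖ)}` supported on
pairwise distinct hyperplanes, with pairwise distinct nonzero amplitudes, is uniquely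
determined by the Gaussian moments `∑ₖ aₖ e^{-l(ρₖ - ⟨y,θₖ⟩)²}`, `1 ≤ l ≤ 2m`, of its
spherical mean transform at the points of a set `Γ` of `n·m(m-1) + 2n + 1` points, no
`n + 1` of which lie on a common affine hyperplane. -/
theorem stmt1 (n m : ℕ) (hn : 1 ≤ n) (hm : 1 ≤ m)
    (θ θ' : Fin m → EuclideanSpace ℝ (Fin n)) (ρ ρ' : Fin m → ℝ) (a a' : Fin m → ℝ)
    (hθ : ∀ k, ‖θ k‖ = 1) (hθ' : ∀ k, ‖θ' k‖ = 1)
    (hρ : ∀ k, 0 < ρ k) (hρ' : ∀ k, 0 < ρ' k)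
    (ha0 : ∀ k, a k ≠ 0) (ha'0 : ∀ k, a' k ≠ 0)
    (ha : Function.Injective a) (ha' : Function.Injective a')
    (hpairs : Function.Injective (fun k => (θ k, ρ k)))
    (hpairs' : Function.Injective (fun k => (θ' k, ρ' k)))
    (Γ : Finset (EuclideanSpace ℝ (Fin n)))
    (hΓcard : Γ.card = n * (m * (m - 1)) + 2 * n + 1)
    (hΓ : ∀ (η : EuclideanSpace ℝ (Fin n)) (c : ℝ), ‖η‖ = 1 →
      (Γ.filter (fun y => ⟪y, η⟫ = c)).card ≤ n)
    (hdata : ∀ y ∈ Γ, ∀ l : ℕ, 1 ≤ l → l ≤ 2 * m →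
      ∑ k, a k * Real.exp (-(l : ℝ) * (ρ k - ⟪y, θ k⟫) ^ 2)
        = ∑ k, a' k * Real.exp (-(l : ℝ) * (ρ' k - ⟪y, θ' k⟫) ^ 2)) :
    ∃ σ : Equiv.Perm (Fin m), ∀ k, a' k = a (σ k) ∧ ρ' k = ρ (σ k) ∧ θ' k = θ (σ k) := by
  refine stmt1_general le_rfl hρ (fun k => (hρ' k).le) ha0 ha hpairs ?_ hΓ ?_
  · simp [hΓcard]
  · simpa only [Fintype.card_fin, ← two_mul] using hdata
end

section
/- Let n ≥ 2 and let λ_1,…,λ_n be real numbers with λ_i ≠ λ_j for i ≠ j. Let σ be a permutation of {1,2,…,n} that is different from the identity. Define the n×n real matrix M by M_{l,k} = λ_k^l − λ_{σ(k)}^l for l = 1,…,n (row index) and k = 1,…,n (column index). Then every vector v = (v_1,…,v_n) ∈ ℝ^n with M v = 0 has two equal components with different indices: there exist i ≠ j with v_i = v_j. -/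
/-!
Summation by parts over `σ` turns row `l` of `M v` into `∑ₖ λₖˡ (vₖ - v_{σ⁻¹(k)})`. The vector
`w = v - v ∘ σ⁻¹` has coordinate sum zero, which is the missing exponent `l = 0`. So `M v = 0` makes
`w` orthogonal to every row of the Vandermonde matrix of the distinct `λₖ`, whence `w = 0`: the
kernel of `M` consists of the vectors that are constant on the cycles of `σ`.
-/

open Matrix

theorem sub_comp_perm_dotProduct {ι R : Type*} [Fintype ι] [NonUnitalNonAssocRing R]
    (σ : Equiv.Perm ι) (f v : ι → R) : (f - f ∘ σ) ⬝ᵥ v = f ⬝ᵥ (v - v ∘ σ.symm) := by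
  rw [sub_dotProduct, dotProduct_sub, dotProduct_comp_equiv_symm]

theorem one_dotProduct_sub_comp_perm {ι R : Type*} [Fintype ι] [NonAssocRing R]
    (σ : Equiv.Perm ι) (v : ι → R) : 1 ⬝ᵥ (v - v ∘ σ) = 0 := by
  simpa [Pi.one_comp] using (sub_comp_perm_dotProduct σ.symm 1 v).symm

theorem mulVec_eq_pow_succ_dotProduct_sub_comp_symm {ι R : Type*} [Fintype ι] [Ring R] {m : ℕ}
    {lam : ι → R} {σ : Equiv.Perm ι} {M : Matrix (Fin m) ι R}
    (hM : ∀ l k, M l k = lam k ^ ((l : ℕ) + 1) - lam (σ k) ^ ((l : ℕ) + 1))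
    (v : ι → R) (l : Fin m) :
    (M *ᵥ v) l = lam ^ ((l : ℕ) + 1) ⬝ᵥ (v - v ∘ σ.symm) := by
  have hrow : M l = lam ^ ((l : ℕ) + 1) - (lam ^ ((l : ℕ) + 1)) ∘ σ := funext (hM l)
  rw [mulVec, hrow, sub_comp_perm_dotProduct]

section IsDomain

variable {R : Type*} [CommRing R] [IsDomain R] {m n : ℕ} {lam : Fin n → R}

theorem eq_zero_of_forall_pow_succ_dotProduct_eq_zero
    (hlam : Function.Injective lam) (hnm : n ≤ m + 1) {w : Fin n → R} (hsum : 1 ⬝ᵥ w = 0)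
    (hpow : ∀ l : Fin m, lam ^ ((l : ℕ) + 1) ⬝ᵥ w = 0) : w = 0 := by
  refine eq_zero_of_forall_pow_sum_mul_pow_eq_zero hlam fun i => ?_
  change w ⬝ᵥ lam ^ (i : ℕ) = 0
  rw [dotProduct_comm]
  obtain ⟨_ | l, hl⟩ := i
  · simpa only [pow_zero] using hsum
  · exact hpow ⟨l, by lia⟩

theorem stmt3_general (hlam : Function.Injective lam) (hnm : n ≤ m + 1)
    (σ : Equiv.Perm (Fin n)) (M : Matrix (Fin m) (Fin n) R)
    (hM : ∀ l k, M l k = lam k ^ ((l : ℕ) + 1) - lam (σ k) ^ ((l : ℕ) + 1)) (v : Fin n → R) :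
    M *ᵥ v = 0 ↔ v ∘ σ = v := by
  have hrow := mulVec_eq_pow_succ_dotProduct_sub_comp_symm hM v
  calc
    M *ᵥ v = 0 ↔ v - v ∘ σ.symm = 0 := by
      constructor
      · intro hv
        refine eq_zero_of_forall_pow_succ_dotProduct_eq_zero hlam hnm
          (one_dotProduct_sub_comp_perm σ.symm v) fun l => ?_
        rw [← hrow, hv, Pi.zero_apply]
      · intro hw
        ext l
        rw [hrow, hw, dotProduct_zero, Pi.zero_apply]
    _ ↔ v ∘ σ = v := by rw [sub_eq_zero, Equiv.eq_comp_symm]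

end IsDomain

/-- Lemma 5.2: if `λ₁,…,λₙ` are distinct reals, `σ` is a non-identity permutation of
`{1,…,n}`, and `M` is the `n×n` matrix with entries `M_{l,k} = λₖˡ - λ_{σ(k)}ˡ`
(`l = 1,…,n`), then every vector in the kernel of `M` has two equal components with
different indices. -/
theorem stmt3 (n : ℕ) (hn : 2 ≤ n) (lam : Fin n → ℝ)
    (hlam : Function.Injective lam)
    (σ : Equiv.Perm (Fin n)) (hσ : σ ≠ 1)
    (M : Matrix (Fin n) (Fin n) ℝ)
    (hM : ∀ l k : Fin n, M l k = lam k ^ ((l : ℕ) + 1) - lam (σ k) ^ ((l : ℕ) + 1))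
    (v : Fin n → ℝ) (hv : M.mulVec v = 0) :
    ∃ i j : Fin n, i ≠ j ∧ v i = v j := by
  obtain ⟨k, hk⟩ := DFunLike.ne_iff.mp hσ
  exact ⟨σ k, k, hk, congrFun ((stmt3_general hlam n.le_succ σ M hM v).mp hv) k⟩
end

section
/- Let n ≥ 1 and let y_1,…,y_{2n+1} ∈ ℝ^n be points such that no affine hyperplane of ℝ^n contains more than n of them. Let θ, θ' be unit vectors in ℝ^n and ρ, ρ' ∈ ℝ, defining hyperplanes H = {x : ⟨x,θ⟩ = ρ} and H' = {x : ⟨x,θ'⟩ = ρ'}. If |ρ − ⟨y_l,θ⟩| = |ρ' − ⟨y_l,θ'⟩| for every l = 1,…,2n+1 (i.e. each y_l is at equal distance from H and H'), then H = H' as subsets of ℝ^n. -/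
open scoped RealInnerProductSpace

/-!
The distances determine the affine functionals `x ↦ ρ - ⟪x, θ⟫` and `x ↦ ρ' - ⟪x, θ'⟫` up to sign
at each point, so at each point their difference or their sum vanishes. If neither the difference
nor the sum were identically zero, each would vanish at no more than `n` points (along a hyperplane,
or nowhere if it is constant), and two sets of at most `n` points cannot exhaust `2n + 1` points.
-/

theorem eq_or_eq_neg_of_forall_abs_map_eq {ι F R : Type*} [AddGroup F] [AddGroup R] [LinearOrder R]
    {e : ι → F →+ R} {n : ℕ} (hι : 2 * n < Nat.card ι)
    (he : ∀ f ≠ 0, {l | e l f = 0}.ncard ≤ n) {f g : F} (hfg : ∀ l, |e l f| = |e l g|) :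
    f = g ∨ f = -g := by
  have cover : {l | e l (f - g) = 0} ∪ {l | e l (f + g) = 0} = Set.univ :=
    Set.eq_univ_of_forall fun l => (abs_eq_abs.mp (hfg l)).imp
      (fun h => by simp [h]) (fun h => by simp [h])
  by_contra! hne
  have hsub := he (f - g) (sub_ne_zero.mpr hne.1)
  have hadd := he (f + g) (mt eq_neg_of_add_eq_zero_left hne.2)
  have hunion := Set.ncard_union_le {l | e l (f - g) = 0} {l | e l (f + g) = 0}
  rw [cover, Set.ncard_univ] at hunion
  omega

section InnerProductSpace

variable {ι E : Type*} [NormedAddCommGroup E] [InnerProductSpace ℝ E] {y : ι → E} {n : ℕ}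

theorem ncard_inner_eq_le_of_ne_zero
    (hy : ∀ (η : E) (c : ℝ), η ≠ 0 → {l | ⟪y l, η⟫ = c}.ncard ≤ n) {p : E × ℝ} (hp : p ≠ 0) :
    {l | ⟪y l, p.1⟫ = p.2}.ncard ≤ n := by
  by_cases hη : p.1 = 0
  · have hc : 0 ≠ p.2 := fun hc => hp (Prod.ext hη hc.symm)
    simp [hη, hc]
  · exact hy p.1 p.2 hη

theorem stmt13_general (hι : 2 * n < Nat.card ι)
    (hy : ∀ (η : E) (c : ℝ), η ≠ 0 → {l | ⟪y l, η⟫ = c}.ncard ≤ n) {θ θ' : E} {ρ ρ' : ℝ}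
    (hdist : ∀ l, |ρ - ⟪y l, θ⟫| = |ρ' - ⟪y l, θ'⟫|) :
    (θ, ρ) = (θ', ρ') ∨ (θ, ρ) = -(θ', ρ') := by
  let e (l : ι) : E × ℝ →+ ℝ := .snd E ℝ - (innerₗ E (y l)).toAddMonoidHom.comp (.fst E ℝ)
  have he (p : E × ℝ) (hp : p ≠ 0) : {l | e l p = 0}.ncard ≤ n := by
    simpa [e, sub_eq_zero, eq_comm] using ncard_inner_eq_le_of_ne_zero hy hp
  exact eq_or_eq_neg_of_forall_abs_map_eq hι he hdist

end InnerProductSpace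

/-- If each of `2n + 1` points, no `n + 1` of which lie on a common affine hyperplane, is
at equal distance from the hyperplanes `H = {⟨x,θ⟩ = ρ}` and `H' = {⟨x,θ'⟩ = ρ'}`, then
`H = H'`. -/
theorem stmt13 (n : ℕ) (hn : 1 ≤ n) (y : Fin (2 * n + 1) → EuclideanSpace ℝ (Fin n))
    (hy_inj : Function.Injective y)
    (hy : ∀ (η : EuclideanSpace ℝ (Fin n)) (c : ℝ), η ≠ 0 →
      {l : Fin (2 * n + 1) | ⟪y l, η⟫ = c}.ncard ≤ n)
    (θ θ' : EuclideanSpace ℝ (Fin n)) (hθ : ‖θ‖ = 1) (hθ' : ‖θ'‖ = 1) (ρ ρ' : ℝ)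
    (hdist : ∀ l, |ρ - ⟪y l, θ⟫| = |ρ' - ⟪y l, θ'⟫|) :
    {x : EuclideanSpace ℝ (Fin n) | ⟪x, θ⟫ = ρ}
      = {x : EuclideanSpace ℝ (Fin n) | ⟪x, θ'⟫ = ρ'} := by
  have h := stmt13_general (by simp) hy hdist
  rcases h with h | h <;> obtain ⟨rfl, rfl⟩ := Prod.mk.inj h <;> simp
end

section
/- Let m ≥ 1, let λ_1,…,λ_m be pairwise distinct reals, let a_1,…,a_m be pairwise distinct reals, and let σ be a permutation of {1,…,m}. If ∑_{k=1}^m a_k λ_k^l = ∑_{k=1}^m a_k λ_{σ(k)}^l for every l = 1,…,m, then σ is the identity permutation. -/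
/-!
Reindexing along `σ` turns `∑ₖ aₖ λₖˡ` into `∑ₖ a_{σ(k)} λ_{σ(k)}ˡ`, so the hypothesis compares the
weights `a` and `a ∘ σ` at the same points `λ_{σ(k)}`. Their `l`-th moments agree for `0 < l < m`,
and for `l = 0` as well because a permutation does not change the sum of the weights. The
Vandermonde matrix of distinct points is nonsingular, so `a ∘ σ = a`, and distinct weights force
`σ = 1`.
-/

theorem eq_of_forall_sum_mul_pow_eq {ι R : Type*} [Fintype ι] [CommRing R] [IsDomain R]
    {x a b : ι → R} (hx : Function.Injective x)
    (h : ∀ l < Fintype.card ι, ∑ k, a k * x k ^ l = ∑ k, b k * x k ^ l) :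
    a = b := by
  let e := Fintype.equivFin ι
  have hzero : (a - b) ∘ e.symm = 0 := by
    refine Matrix.eq_zero_of_forall_pow_sum_mul_pow_eq_zero (hx.comp e.symm.injective) fun l => ?_
    calc ∑ i, (a - b) (e.symm i) * x (e.symm i) ^ (l : ℕ)
        = ∑ k, (a - b) k * x k ^ (l : ℕ) := e.symm.sum_comp fun k => (a - b) k * x k ^ (l : ℕ)
      _ = ∑ k, a k * x k ^ (l : ℕ) - ∑ k, b k * x k ^ (l : ℕ) := by
        simp only [Pi.sub_apply, sub_mul, Finset.sum_sub_distrib]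
      _ = 0 := sub_eq_zero.mpr (h l l.isLt)
  exact sub_eq_zero.mp (e.symm.surjective.injective_comp_right hzero)

theorem comp_perm_eq_self_of_forall_sum_mul_pow_eq {ι R : Type*} [Fintype ι] [CommRing R]
    [IsDomain R] {x a : ι → R} (hx : Function.Injective x) {σ : Equiv.Perm ι}
    (h : ∀ l, 1 ≤ l → l < Fintype.card ι → ∑ k, a k * x k ^ l = ∑ k, a k * x (σ k) ^ l) :
    a ∘ σ = a := by
  refine eq_of_forall_sum_mul_pow_eq (hx.comp σ.injective) fun l hl => ?_
  calc ∑ k, a (σ k) * x (σ k) ^ l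
      = ∑ k, a k * x k ^ l := Equiv.sum_comp σ fun k => a k * x k ^ l
    _ = ∑ k, a k * x (σ k) ^ l := by
      rcases Nat.eq_zero_or_pos l with rfl | hpos
      · simp only [pow_zero]
      · exact h l hpos hl

theorem stmt16_general {ι R : Type*} [Fintype ι] [CommRing R] [IsDomain R] {x a : ι → R}
    (hx : Function.Injective x) (ha : Function.Injective a) {σ : Equiv.Perm ι}
    (h : ∀ l, 1 ≤ l → l < Fintype.card ι → ∑ k, a k * x k ^ l = ∑ k, a k * x (σ k) ^ l) :
    σ = 1 :=
  Equiv.ext fun k => ha (congrFun (comp_perm_eq_self_of_forall_sum_mul_pow_eq hx h) k)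

/-- If `λ₁,…,λₘ` are pairwise distinct reals, `a₁,…,aₘ` are pairwise distinct reals, and a
permutation `σ` of the indices satisfies `∑ₖ aₖ λₖˡ = ∑ₖ aₖ λ_{σ(k)}ˡ` for `l = 1,…,m`,
then `σ` is the identity. -/
theorem stmt16 (m : ℕ) (hm : 1 ≤ m) (lam a : Fin m → ℝ)
    (hlam : Function.Injective lam) (ha : Function.Injective a)
    (σ : Equiv.Perm (Fin m))
    (h : ∀ l : ℕ, 1 ≤ l → l ≤ m →
      ∑ k, a k * lam k ^ l = ∑ k, a k * lam (σ k) ^ l) :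
    σ = 1 :=
  stmt16_general hlam ha fun l hl hlm => h l hl (hlm.le.trans_eq (Fintype.card_fin m))
end

section
/- Let n ≥ 2, let λ_1,…,λ_n be pairwise distinct reals, and let σ be a permutation of {1,…,n} such that σ(B) ≠ B for every nonempty proper subset B ⊊ {1,…,n} (equivalently, σ is a single n-cycle). Define the n×n matrix M by M_{l,k} = λ_k^l − λ_{σ(k)}^l for l,k ∈ {1,…,n}. Then the kernel of M is exactly the one-dimensional span of the all-ones vector (1,1,…,1). -/
/-!
Reindexing the sums along `σ` turns the entries of `M v` into the moments `∑ₖ λₖˡ wₖ` of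
`w = v - v ∘ σ⁻¹`. The zeroth moment of `w` vanishes for free, so `M v = 0` says that sufficiently
many consecutive moments vanish, and the nonsingularity of the Vandermonde matrix gives `w = 0`.
Thus the kernel consists of the `σ`-invariant vectors, whose level sets are `σ`-invariant.
-/

section

variable {ι R : Type*} [Fintype ι]

theorem sum_sub_comp_perm_mul [NonUnitalNonAssocRing R] (σ : Equiv.Perm ι) (f v : ι → R) :
    ∑ k, (f k - f (σ k)) * v k = ∑ k, f k * (v k - v (σ.symm k)) := by
  have reindex : ∑ k, f (σ k) * v k = ∑ k, f k * v (σ.symm k) := by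
    simpa only [Equiv.symm_apply_apply] using Equiv.sum_comp σ fun k => f k * v (σ.symm k)
  simp only [sub_mul, mul_sub, Finset.sum_sub_distrib, reindex]

theorem eq_zero_of_forall_sum_pow_mul_eq_zero [CommRing R] [IsDomain R] {x w : ι → R}
    (hx : Function.Injective x) (hw : ∀ l < Fintype.card ι, ∑ k, x k ^ l * w k = 0) :
    w = 0 := by
  let e := (Fintype.equivFin ι).symm
  have hwe : w ∘ e = 0 := by
    refine Matrix.eq_zero_of_forall_pow_sum_mul_pow_eq_zero (hx.comp e.injective) fun l => ?_
    calc ∑ j, w (e j) * x (e j) ^ (l : ℕ)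
        = ∑ k, w k * x k ^ (l : ℕ) := Equiv.sum_comp e fun k => w k * x k ^ (l : ℕ)
      _ = 0 := by simpa only [mul_comm] using hw l l.isLt
  exact e.surjective.injective_comp_right hwe

/-- The matrix of power differences `x_kˡ - x_{σ(k)}ˡ` for exponents `l = 1, …, m`; since `Fin m`
starts at `0`, row `l` carries the exponent `l + 1`. -/
def powDiffMatrix [Ring R] (m : ℕ) (x : ι → R) (σ : Equiv.Perm ι) : Matrix (Fin m) ι R :=
  Matrix.of fun l k => x k ^ ((l : ℕ) + 1) - x (σ k) ^ ((l : ℕ) + 1)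

theorem powDiffMatrix_mulVec_apply [Ring R] {m : ℕ} (x : ι → R) (σ : Equiv.Perm ι) (v : ι → R)
    (l : Fin m) :
    (powDiffMatrix m x σ).mulVec v l = ∑ k, x k ^ ((l : ℕ) + 1) * (v k - v (σ.symm k)) :=
  sum_sub_comp_perm_mul σ (fun k => x k ^ ((l : ℕ) + 1)) v

theorem powDiffMatrix_mulVec_eq_zero_iff [CommRing R] [IsDomain R] {m : ℕ}
    (hm : Fintype.card ι ≤ m + 1) {x : ι → R} (hx : Function.Injective x) (σ : Equiv.Perm ι)
    (v : ι → R) : (powDiffMatrix m x σ).mulVec v = 0 ↔ v ∘ σ = v := by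
  have invariant_iff : v ∘ σ = v ↔ v - v ∘ σ.symm = 0 := by
    rw [sub_eq_zero, Equiv.eq_comp_symm]
  rw [invariant_iff]
  constructor
  · intro hv
    refine eq_zero_of_forall_sum_pow_mul_eq_zero hx fun l hl => ?_
    cases l with
    | zero => simp [Equiv.sum_comp σ.symm v]
    | succ l =>
      have hrow := congrFun hv ⟨l, by omega⟩
      rwa [powDiffMatrix_mulVec_apply] at hrow
  · intro hw
    funext l
    rw [powDiffMatrix_mulVec_apply]
    exact Finset.sum_eq_zero fun k _ => by
      rw [show v k - v (σ.symm k) = 0 from congrFun hw k, mul_zero]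

theorem comp_perm_eq_iff_exists_eq_const {α : Type*} [Nonempty α] [DecidableEq ι]
    {σ : Equiv.Perm ι}
    (hσ : ∀ B : Finset ι, B.Nonempty → B ≠ Finset.univ → B.image σ ≠ B) (v : ι → α) :
    v ∘ σ = v ↔ ∃ c, v = Function.const ι c := by
  classical
  refine ⟨fun hv => Set.exists_eq_const_of_preimage_singleton fun c => ?_, by rintro ⟨c, rfl⟩; rfl⟩
  let B : Finset ι := {k | v k = c}
  have coe_B : (B : Set ι) = v ⁻¹' {c} := Finset.coe_filter_univ _
  have image_subset : B.image σ ⊆ B := Finset.image_subset_iff.mpr fun k hk => by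
    simpa [B, show v (σ k) = v k from congrFun hv k] using hk
  have image_eq : B.image σ = B :=
    Finset.eq_of_subset_of_card_le image_subset (Finset.card_image_of_injective B σ.injective).ge
  rw [← coe_B, Finset.coe_eq_empty, Finset.coe_eq_univ, or_iff_not_imp_left]
  intro B_ne_empty
  by_contra B_ne_univ
  exact hσ B (Finset.nonempty_iff_ne_empty.mpr B_ne_empty) B_ne_univ image_eq

theorem stmt17_general [CommRing R] [IsDomain R] [DecidableEq ι] {m : ℕ}
    (hm : Fintype.card ι ≤ m + 1) {x : ι → R} (hx : Function.Injective x) {σ : Equiv.Perm ι}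
    (hσ : ∀ B : Finset ι, B.Nonempty → B ≠ Finset.univ → B.image σ ≠ B) (v : ι → R) :
    (powDiffMatrix m x σ).mulVec v = 0 ↔ ∃ c : R, v = Function.const ι c :=
  (powDiffMatrix_mulVec_eq_zero_iff hm hx σ v).trans (comp_perm_eq_iff_exists_eq_const hσ v)

end

/-- The case `k = 1` in the proof of Lemma 5.2: if `λ₁,…,λₙ` are pairwise distinct and the
permutation `σ` has no nonempty proper invariant subset (i.e. it is a single `n`-cycle),
then the kernel of the matrix `M_{l,k} = λₖˡ - λ_{σ(k)}ˡ` (`l = 1,…,n`) is exactly the span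
of the all-ones vector. -/
theorem stmt17 (n : ℕ) (hn : 2 ≤ n) (lam : Fin n → ℝ)
    (hlam : Function.Injective lam)
    (σ : Equiv.Perm (Fin n))
    (hσ : ∀ B : Finset (Fin n), B.Nonempty → B ≠ Finset.univ → B.image σ ≠ B)
    (M : Matrix (Fin n) (Fin n) ℝ)
    (hM : ∀ l k : Fin n, M l k = lam k ^ ((l : ℕ) + 1) - lam (σ k) ^ ((l : ℕ) + 1)) :
    ∀ v : Fin n → ℝ, M.mulVec v = 0 ↔ ∃ c : ℝ, v = Function.const (Fin n) c := by
  obtain rfl : M = powDiffMatrix n lam σ := Matrix.ext hM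
  exact stmt17_general (by simp) hlam hσ
end
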